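/- Let M be an n×n real positive semidefinite symmetric matrix with spectral decomposition M = UΣUᵀ (U orthogonal with columns Uᵢ, eigenvalues σ₁ ≥ … ≥ σₙ ≥ 0), let y ∈ ℝⁿ, let γ₀ > 0, and set σᵢ' := σᵢ + γ₀. If γ > γ₀ and β ∈ ℝⁿ satisfies (M + γIₙ)β = y, then setting λᵢ := 1/(σᵢ + γ) for each i, the pair (λ₁,…,λₙ, β) satisfies: Uᵢᵀβ = λᵢ Uᵢᵀy for all i; 0 < λᵢ ≤ 1/σᵢ' for all i; and (σᵢ₊₁'/σᵢ')·λᵢ₊₁ ≤ λᵢ ≤ λᵢ₊₁ for all i = 1,…,n−1. In other words, the ridge solution set is contained in the polytope R. -/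

import Mathlib

open Matrix

/-!
Pairing the ridge equation with a left eigenvector `v` of `M` of eigenvalue `s` gives
`(s + γ) * (v ⬝ᵥ β) = v ⬝ᵥ y`. The comparison of consecutive `λᵢ` is the monotonicity of
`x ↦ x / (x + t)` for `t = γ - γ₀ ≥ 0`, evaluated at the shifted eigenvalues `x = σᵢ + γ₀`.
-/

section CommRing

variable {m R : Type*} [Fintype m] [CommRing R]

theorem add_mul_dotProduct_eq_of_vecMul_eq_smul [DecidableEq m] {M : Matrix m m R}
    {v β y : m → R} {s γ : R} (hv : v ᵥ* M = s • v) (hβ : (M + γ • 1) *ᵥ β = y) :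
    (s + γ) * (v ⬝ᵥ β) = v ⬝ᵥ y :=
  calc (s + γ) * (v ⬝ᵥ β) = (s • v + γ • v) ⬝ᵥ β := by
        rw [← add_smul, smul_dotProduct, smul_eq_mul]
    _ = (v ᵥ* (M + γ • 1)) ⬝ᵥ β := by rw [vecMul_add, hv, vecMul_smul, vecMul_one]
    _ = v ⬝ᵥ y := by rw [← dotProduct_mulVec, hβ]

theorem transpose_vecMul_mul_diagonal_mul_transpose {ι : Type*} [Fintype ι] [DecidableEq ι]
    {U : Matrix m ι R} (hU : Uᵀ * U = 1) (σ : ι → R) (i : ι) :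
    Uᵀ i ᵥ* (U * diagonal σ * Uᵀ) = σ i • Uᵀ i := by
  have hmul : Uᵀ * (U * diagonal σ * Uᵀ) = diagonal σ * Uᵀ := by
    rw [Matrix.mul_assoc U, ← Matrix.mul_assoc Uᵀ U, hU, Matrix.one_mul]
  rw [← mul_apply_eq_vecMul, hmul]
  ext k
  exact diagonal_mul σ Uᵀ i k

end CommRing

section OrderedField

variable {K : Type*} [Field K] [LinearOrder K] [IsStrictOrderedRing K]

theorem div_add_le_div_add_of_le {a b t : K} (ha : 0 < a) (hab : a ≤ b) (ht : 0 ≤ t) :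
    a / (a + t) ≤ b / (b + t) := by
  have hb : 0 < b := ha.trans_le hab
  rw [div_le_div_iff₀ (by positivity) (by positivity), mul_add, mul_add, mul_comm b a]
  gcongr

theorem div_mul_one_div_add_le_one_div_add {a b t : K} (ha : 0 < a) (hab : a ≤ b) (ht : 0 ≤ t) :
    a / b * (1 / (a + t)) ≤ 1 / (b + t) := by
  have hb : 0 < b := ha.trans_le hab
  calc a / b * (1 / (a + t)) = a / (a + t) / b := by ring
    _ ≤ b / (b + t) / b := by gcongr ?_ / b; exact div_add_le_div_add_of_le ha hab ht
    _ = 1 / (b + t) := by field_simp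

theorem ridge_solution_mem_relaxation_general {m ι : Type*} [Fintype m] [DecidableEq m]
    {M : Matrix m m K} {v : ι → m → K} {σ : ι → K} (hv : ∀ i, v i ᵥ* M = σ i • v i)
    {y β : m → K} {γ₀ γ : K} (hσ : ∀ i, 0 < σ i + γ₀) (hγ : γ₀ ≤ γ)
    (hβ : (M + γ • 1) *ᵥ β = y) :
    (∀ i, v i ⬝ᵥ β = 1 / (σ i + γ) * (v i ⬝ᵥ y)) ∧
    (∀ i, 0 < 1 / (σ i + γ) ∧ 1 / (σ i + γ) ≤ 1 / (σ i + γ₀)) ∧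
    (∀ i j, σ j ≤ σ i →
      (σ j + γ₀) / (σ i + γ₀) * (1 / (σ j + γ)) ≤ 1 / (σ i + γ) ∧
      1 / (σ i + γ) ≤ 1 / (σ j + γ)) := by
  have hpos i : 0 < σ i + γ := (hσ i).trans_le (by gcongr)
  have hshift i : σ i + γ₀ + (γ - γ₀) = σ i + γ := by ring
  refine ⟨fun i => ?_, fun i => ⟨one_div_pos.mpr (hpos i), ?_⟩, fun i j hji => ⟨?_, ?_⟩⟩
  · rw [← add_mul_dotProduct_eq_of_vecMul_eq_smul (hv i) hβ, one_div,
      inv_mul_cancel_left₀ (hpos i).ne']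
  · exact one_div_le_one_div_of_le (hσ i) (by gcongr)
  · simpa only [hshift] using
      div_mul_one_div_add_le_one_div_add (hσ j) (add_le_add_left hji γ₀) (sub_nonneg.mpr hγ)
  · exact one_div_le_one_div_of_le (hpos j) (by gcongr)

end OrderedField

/-- Every point of the ridge solution set lies in the relaxation polytope `R`:
if `γ > γ₀` and `(M + γI)β = y`, then `λᵢ := 1/(σᵢ + γ)` together with `β`
satisfies the defining equalities and inequalities of `R`
(with `σᵢ' = σᵢ + γ₀`). -/
theorem ridge_solution_mem_relaxation {n : ℕ} (M U : Matrix (Fin n) (Fin n) ℝ)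
    (σ : Fin n → ℝ) (hM : M.PosSemidef) (hU : Uᵀ * U = 1)
    (hdecomp : M = U * Matrix.diagonal σ * Uᵀ) (hσ_nonneg : ∀ i, 0 ≤ σ i)
    (hσ_mono : ∀ i j : Fin n, i ≤ j → σ j ≤ σ i)
    (y β : Fin n → ℝ) (γ₀ γ : ℝ) (hγ₀ : 0 < γ₀) (hγ : γ₀ < γ)
    (hβ : (M + γ • 1).mulVec β = y) :
    (∀ i, Uᵀ i ⬝ᵥ β = (1 / (σ i + γ)) * (Uᵀ i ⬝ᵥ y)) ∧
    (∀ i, 0 < 1 / (σ i + γ) ∧ 1 / (σ i + γ) ≤ 1 / (σ i + γ₀)) ∧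
    (∀ i : Fin n, ∀ hi : (i : ℕ) + 1 < n,
      (σ ⟨i + 1, hi⟩ + γ₀) / (σ i + γ₀) * (1 / (σ ⟨i + 1, hi⟩ + γ)) ≤ 1 / (σ i + γ) ∧
      1 / (σ i + γ) ≤ 1 / (σ ⟨i + 1, hi⟩ + γ)) := by
  obtain ⟨hdot, hbounds, hcompare⟩ := ridge_solution_mem_relaxation_general
    (v := Uᵀ) (hdecomp ▸ transpose_vecMul_mul_diagonal_mul_transpose hU σ)
    (fun i => add_pos_of_nonneg_of_pos (hσ_nonneg i) hγ₀) hγ.le hβ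
  exact ⟨hdot, hbounds, fun i hi => hcompare i _ (hσ_mono i _ (Fin.le_def.mpr (Nat.le_succ i)))⟩
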